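/- arXiv:1902.05603 — 2 statements merged into one kernel-verified Lean document; each statement's English description precedes it below -/
import Mathlib

section
/- Let n ≥ 3 and ℓ ≥ 1. The principal congruence subgroup Γ_n(ℓ), i.e. the kernel of the reduction map SL_n(ℤ) → SL_n(ℤ/ℓℤ), is the smallest normal subgroup of SL_n(ℤ) containing the ℓ-th power E^ℓ of the elementary matrix E = E_{1,2} (identity plus a 1 in position (1,2)). -/
open Matrix

/-- The elementary matrix `E = E_{1,2}` (identity plus a `1` in position `(1,2)`)
as an element of `SL_{n+3}(R)`. -/
def Emat (n : ℕ) (R : Type*) [CommRing R] :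
    Matrix.SpecialLinearGroup (Fin (n + 3)) R :=
  ⟨Matrix.transvection 0 1 1, by exact Matrix.det_transvection_of_ne 0 1 zero_ne_one 1⟩

namespace Menn

/-- elementary matrix in `SL` -/
def T {ι : Type*} [Fintype ι] [DecidableEq ι] (i j : ι) (h : i ≠ j) (c : ℤ) :
    SpecialLinearGroup ι ℤ := ⟨transvection i j c, det_transvection_of_ne i j h c⟩

/-- 3x3 block in position 01 -/
def B01 (a b c d : ℤ) (h : a * d - b * c = 1) : SpecialLinearGroup (Fin 3) ℤ :=
  ⟨!![a, b, 0; c, d, 0; 0, 0, 1], by simp [det_fin_three]; linarith⟩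
/-- 3x3 block in position 12 -/
def B12 (a b c d : ℤ) (h : a * d - b * c = 1) : SpecialLinearGroup (Fin 3) ℤ :=
  ⟨!![1, 0, 0; 0, a, b; 0, c, d], by simp [det_fin_three]; linarith⟩
/-- 3x3 block in position 02 -/
def B02 (a b c d : ℤ) (h : a * d - b * c = 1) : SpecialLinearGroup (Fin 3) ℤ :=
  ⟨!![a, 0, b; 0, 1, 0; c, 0, d], by simp [det_fin_three]; linarith⟩

theorem B01c (a b c d h) : (B01 a b c d h).1 = !![a, b, 0; c, d, 0; 0, 0, 1] := rfl
theorem B12c (a b c d h) : (B12 a b c d h).1 = !![1, 0, 0; 0, a, b; 0, c, d] := rfl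
theorem B02c (a b c d h) : (B02 a b c d h).1 = !![a, 0, b; 0, 1, 0; c, 0, d] := rfl

theorem T01 (h) (x : ℤ) : (T (0 : Fin 3) 1 h x).1 = !![1, x, 0; 0, 1, 0; 0, 0, 1] := by
  ext i j; fin_cases i <;> fin_cases j <;> simp [T, transvection, single]
theorem T02 (h) (x : ℤ) : (T (0 : Fin 3) 2 h x).1 = !![1, 0, x; 0, 1, 0; 0, 0, 1] := by
  ext i j; fin_cases i <;> fin_cases j <;> simp [T, transvection, single]
theorem T10 (h) (x : ℤ) : (T (1 : Fin 3) 0 h x).1 = !![1, 0, 0; x, 1, 0; 0, 0, 1] := by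
  ext i j; fin_cases i <;> fin_cases j <;> simp [T, transvection, single]
theorem T12 (h) (x : ℤ) : (T (1 : Fin 3) 2 h x).1 = !![1, 0, 0; 0, 1, x; 0, 0, 1] := by
  ext i j; fin_cases i <;> fin_cases j <;> simp [T, transvection, single]
theorem T20 (h) (x : ℤ) : (T (2 : Fin 3) 0 h x).1 = !![1, 0, 0; 0, 1, 0; x, 0, 1] := by
  ext i j; fin_cases i <;> fin_cases j <;> simp [T, transvection, single]
theorem T21 (h) (x : ℤ) : (T (2 : Fin 3) 1 h x).1 = !![1, 0, 0; 0, 1, 0; 0, x, 1] := by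
  ext i j; fin_cases i <;> fin_cases j <;> simp [T, transvection, single]

theorem T_add {ι : Type*} [Fintype ι] [DecidableEq ι] (i j : ι) (h : i ≠ j) (c d : ℤ) :
    T i j h (c + d) = T i j h c * T i j h d := by
  apply Subtype.ext
  exact (transvection_mul_transvection_same _ _ h _ _).symm

theorem T_zero {ι : Type*} [Fintype ι] [DecidableEq ι] (i j : ι) (h : i ≠ j) :
    T i j h 0 = 1 := by
  apply Subtype.ext
  simp [T]

theorem T_neg {ι : Type*} [Fintype ι] [DecidableEq ι] (i j : ι) (h : i ≠ j) (c : ℤ) :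
    T i j h (-c) = (T i j h c)⁻¹ := by
  rw [eq_inv_iff_mul_eq_one, ← T_add, neg_add_cancel, T_zero]

section A
variable {Q : Type*} [Group Q] (F : SpecialLinearGroup (Fin 3) ℤ →* Q) (l : ℤ)
  (hF : ∀ (i j : Fin 3) (h : i ≠ j) (c : ℤ), l ∣ c → F (T i j h c) = 1)

include hF

theorem F_congr (i j : Fin 3) (h : i ≠ j) (c d : ℤ) (hcd : l ∣ c - d) :
    F (T i j h c) = F (T i j h d) := by
  have := T_add i j h (c - d) d
  rw [sub_add_cancel] at this
  rw [this, map_mul, hF _ _ _ _ hcd, one_mul]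

theorem comm02 (a b c d : ℤ) (h : a * d - b * c = 1) (ha : l ∣ a - 1) (hb : l ∣ b) (hc : l ∣ c)
    (hd : l ∣ d - 1) (h') (x : ℤ) : Commute (F (B01 a b c d h)) (F (T 0 2 h' x)) := by
  have e : B01 a b c d h * T 0 2 h' x = T 0 2 h' (a * x) * T 1 2 (by decide) (c * x) * B01 a b c d h := by
    apply Subtype.ext
    simp [T02, T12, B01c]
  have := congrArg F e
  simp only [map_mul] at this
  rw [hF 1 2 _ _ (Dvd.dvd.mul_right hc x), F_congr F l hF 0 2 h' (a * x) x (by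
    have : a * x - x = (a - 1) * x := by ring
    rw [this]; exact Dvd.dvd.mul_right ha x), mul_one] at this
  exact this

theorem comm12 (a b c d : ℤ) (h : a * d - b * c = 1) (ha : l ∣ a - 1) (hb : l ∣ b) (hc : l ∣ c)
    (hd : l ∣ d - 1) (h') (x : ℤ) : Commute (F (B01 a b c d h)) (F (T 1 2 h' x)) := by
  have e : B01 a b c d h * T 1 2 h' x = T 1 2 h' (d * x) * T 0 2 (by decide) (b * x) * B01 a b c d h := by
    apply Subtype.ext
    simp [T02, T12, B01c]
  have := congrArg F e
  simp only [map_mul] at this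
  rw [hF 0 2 _ _ (Dvd.dvd.mul_right hb x), F_congr F l hF 1 2 h' (d * x) x (by
    have : d * x - x = (d - 1) * x := by ring
    rw [this]; exact Dvd.dvd.mul_right hd x), mul_one] at this
  exact this

theorem comm20 (a b c d : ℤ) (h : a * d - b * c = 1) (ha : l ∣ a - 1) (hb : l ∣ b) (hc : l ∣ c)
    (hd : l ∣ d - 1) (h') (x : ℤ) : Commute (F (B01 a b c d h)) (F (T 2 0 h' x)) := by
  have e : T 2 0 h' x * B01 a b c d h  = B01 a b c d h * (T 2 0 h' (a * x) * T 2 1 (by decide) (b * x)) := by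
    apply Subtype.ext
    simp [T20, T21, B01c, mul_comm]
  have := congrArg F e
  simp only [map_mul] at this
  rw [hF 2 1 _ _ (Dvd.dvd.mul_right hb x), F_congr F l hF 2 0 h' (a * x) x (by
    have : a * x - x = (a - 1) * x := by ring
    rw [this]; exact Dvd.dvd.mul_right ha x), mul_one] at this
  exact this.symm

theorem comm21 (a b c d : ℤ) (h : a * d - b * c = 1) (ha : l ∣ a - 1) (hb : l ∣ b) (hc : l ∣ c)
    (hd : l ∣ d - 1) (h') (x : ℤ) : Commute (F (B01 a b c d h)) (F (T 2 1 h' x)) := by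
  have e : T 2 1 h' x * B01 a b c d h  = B01 a b c d h * (T 2 1 h' (d * x) * T 2 0 (by decide) (c * x)) := by
    apply Subtype.ext
    simp [T20, T21, B01c, mul_comm]
  have := congrArg F e
  simp only [map_mul] at this
  rw [hF 2 0 _ _ (Dvd.dvd.mul_right hc x), F_congr F l hF 2 1 h' (d * x) x (by
    have : d * x - x = (d - 1) * x := by ring
    rw [this]; exact Dvd.dvd.mul_right hd x), mul_one] at this
  exact this.symm

theorem comm01 (a b c d : ℤ) (h : a * d - b * c = 1) (ha : l ∣ a - 1) (hb : l ∣ b) (hc : l ∣ c)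
    (hd : l ∣ d - 1) (h') (x : ℤ) : Commute (F (B01 a b c d h)) (F (T 0 1 h' x)) := by
  have e : T 0 1 h' x = T 0 2 (by decide) x * T 2 1 (by decide) 1 * T 0 2 (by decide) (-x)
      * T 2 1 (by decide) (-1) := by
    apply Subtype.ext
    simp [T02, T21, T01]
  rw [e, map_mul, map_mul, map_mul]
  exact (((comm02 F l hF a b c d h ha hb hc hd _ _).mul_right
    (comm21 F l hF a b c d h ha hb hc hd _ _)).mul_right
    (comm02 F l hF a b c d h ha hb hc hd _ _)).mul_right
    (comm21 F l hF a b c d h ha hb hc hd _ _)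

theorem comm10 (a b c d : ℤ) (h : a * d - b * c = 1) (ha : l ∣ a - 1) (hb : l ∣ b) (hc : l ∣ c)
    (hd : l ∣ d - 1) (h') (x : ℤ) : Commute (F (B01 a b c d h)) (F (T 1 0 h' x)) := by
  have e : T 1 0 h' x = T 1 2 (by decide) x * T 2 0 (by decide) 1 * T 1 2 (by decide) (-x)
      * T 2 0 (by decide) (-1) := by
    apply Subtype.ext
    simp [T12, T20, T10]
  rw [e, map_mul, map_mul, map_mul]
  exact (((comm12 F l hF a b c d h ha hb hc hd _ _).mul_right
    (comm20 F l hF a b c d h ha hb hc hd _ _)).mul_right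
    (comm12 F l hF a b c d h ha hb hc hd _ _)).mul_right
    (comm20 F l hF a b c d h ha hb hc hd _ _)

theorem F02 (a b c d : ℤ) (h : a * d - b * c = 1) (ha : l ∣ a - 1) (hb : l ∣ b) (hc : l ∣ c)
    (hd : l ∣ d - 1) : F (B02 a b c d h) = F (B01 a b c d h) := by
  have e : (T 2 1 (by decide) 1 * T 1 2 (by decide) (-1) * T 2 1 (by decide) 1) * B01 a b c d h =
     B02 a b c d h * (T 2 1 (by decide) 1 * T 1 2 (by decide) (-1) * T 2 1 (by decide) 1) := by
    apply Subtype.ext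
    simp [T21, T12, B01c, B02c]
  have e' := congrArg F e
  have := (((comm21 F l hF a b c d h ha hb hc hd (by decide) 1).mul_right
    (comm12 F l hF a b c d h ha hb hc hd (by decide) (-1))).mul_right
    (comm21 F l hF a b c d h ha hb hc hd (by decide) 1)).eq
  simp only [← map_mul] at this e'
  rw [← this] at e'
  simp only [map_mul] at e'
  exact (mul_right_cancel e').symm

theorem F12 (a b c d : ℤ) (h : a * d - b * c = 1) (ha : l ∣ a - 1) (hb : l ∣ b) (hc : l ∣ c)
    (hd : l ∣ d - 1) : F (B12 a b c d h) = F (B01 a b c d h) := by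
  have e : (T 1 0 (by decide) 1 * T 0 1 (by decide) (-1) * T 1 0 (by decide) 1 *
      (T 2 1 (by decide) 1 * T 1 2 (by decide) (-1) * T 2 1 (by decide) 1)) * B01 a b c d h =
     B12 a b c d h * (T 1 0 (by decide) 1 * T 0 1 (by decide) (-1) * T 1 0 (by decide) 1 *
      (T 2 1 (by decide) 1 * T 1 2 (by decide) (-1) * T 2 1 (by decide) 1)) := by
    apply Subtype.ext
    simp [T21, T12, T01, T10, B01c, B12c]
  have e' := congrArg F e
  have := ((((comm10 F l hF a b c d h ha hb hc hd (by decide) 1).mul_right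
    (comm01 F l hF a b c d h ha hb hc hd (by decide) (-1))).mul_right
    (comm10 F l hF a b c d h ha hb hc hd (by decide) 1)).mul_right
    (((comm21 F l hF a b c d h ha hb hc hd (by decide) 1).mul_right
    (comm12 F l hF a b c d h ha hb hc hd (by decide) (-1))).mul_right
    (comm21 F l hF a b c d h ha hb hc hd (by decide) 1))).eq
  simp only [← map_mul] at this e'
  rw [← this] at e'
  simp only [map_mul] at e'
  exact (mul_right_cancel e').symm

omit hF in
/-- Mennicke symbol relation -/
def R (F : SpecialLinearGroup (Fin 3) ℤ →* Q) (l : ℤ) (a b : ℤ) (g : Q) : Prop :=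
  l ∣ a - 1 ∧ l ∣ b ∧ ∃ (c d : ℤ) (h : a * d - b * c = 1), l ∣ c ∧ F (B01 a b c d h) = g

omit hF in
theorem dvd_d (a b c d : ℤ) (h : a * d - b * c = 1) (ha : l ∣ a - 1) (hb : l ∣ b) : l ∣ d - 1 := by
  obtain ⟨x, hx⟩ := ha
  obtain ⟨y, hy⟩ := hb
  refine ⟨y * c - x * d, ?_⟩
  have : a = l * x + 1 := by linarith
  subst this; subst hy; linear_combination h

omit hF in
theorem R_exists (a b : ℤ) (ha : l ∣ a - 1) (hb : l ∣ b) (hab : IsCoprime a b) : ∃ g, R F l a b g := by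
  obtain ⟨u, v, h⟩ := hab
  have h' : a * (u + v * b) - b * (v * (a - 1)) = 1 := by linear_combination h
  exact ⟨_, ha, hb, _, _, h', Dvd.dvd.mul_left ha _, rfl⟩

omit hF in
theorem R_coprime {a b : ℤ} {g : Q} (h : R F l a b g) : IsCoprime a b := by
  obtain ⟨_, _, c, d, h, _⟩ := h
  exact ⟨d, -c, by linear_combination h⟩

theorem R_unique {a b : ℤ} {g g' : Q} (h : R F l a b g) (h' : R F l a b g') : g = g' := by
  obtain ⟨ha, hb, c, d, h, hc, rfl⟩ := h
  obtain ⟨-, -, c', d', h', hc', rfl⟩ := h'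
  have e : B01 a b c d h = T 1 0 (by decide) (d' * c - c' * d) * B01 a b c' d' h' := by
    apply Subtype.ext
    simp [T10, B01c]
    constructor
    · linear_combination (-c) * h' + c' * h
    · linear_combination (-d) * h' + d' * h
  rw [e, map_mul, hF, one_mul]
  exact dvd_sub (Dvd.dvd.mul_left hc _) (Dvd.dvd.mul_right hc' _)

theorem R_addb {a b : ℤ} {g : Q} (h : R F l a b g) (t : ℤ) (ht : l ∣ t) : R F l a (b + t * a) g := by
  obtain ⟨ha, hb, c, d, h, hc, rfl⟩ := h
  refine ⟨ha, dvd_add hb (Dvd.dvd.mul_right ht _), c, d + t * c, by linear_combination h, hc, ?_⟩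
  have e : B01 a (b + t * a) c (d + t * c) (by linear_combination h)
      = B01 a b c d h * T 0 1 (by decide) t := by
    apply Subtype.ext
    simp [T01, B01c, mul_comm, add_comm]
  rw [e, map_mul, hF _ _ _ _ ht, mul_one]

theorem R_adda {a b : ℤ} {g : Q} (h : R F l a b g) (t : ℤ) : R F l (a + t * b) b g := by
  have hh := h
  obtain ⟨ha, hb, c, d, h, hc, rfl⟩ := h
  have hd := dvd_d l a b c d h ha hb
  have h2 : (a + t * b) * (d - t * b) - b * (c + t * d - t * (a + t * b)) = 1 := by
    linear_combination h
  have ha' : l ∣ a + t * b - 1 := by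
    have := dvd_add ha (Dvd.dvd.mul_left hb t)
    rwa [show a + t * b - 1 = a - 1 + t * b by ring]
  refine ⟨ha', hb, _, _, h2, ?_, ?_⟩
  · have : c + t * d - t * (a + t * b) = c + t * (d - 1) - t * (a + t * b - 1) := by ring
    rw [this]
    exact dvd_sub (dvd_add hc (Dvd.dvd.mul_left hd _)) (Dvd.dvd.mul_left ha' _)
  · have e : T 1 0 (by decide) t * B01 _ _ _ _ h2 = B01 a b c d h * T 1 0 (by decide) t := by
      apply Subtype.ext
      simp [T10, B01c]
      exact ⟨mul_comm _ _, mul_comm _ _⟩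
    have e' := congrArg F e
    rw [map_mul, map_mul, (comm10 F l hF a b c d h ha hb hc hd _ t).eq] at e'
    exact mul_left_cancel e'

theorem R_mul {a b1 b2 : ℤ} {g1 g2 : Q} (h1 : R F l a b1 g1) (h2 : R F l a b2 g2) :
    R F l a (b1 * b2) (g1 * g2) := by
  obtain ⟨ha, hb1, c1, d1, h1, hc1, rfl⟩ := h1
  obtain ⟨-, hb2, c2, d2, h2, hc2, rfl⟩ := h2
  have hd1 := dvd_d l a b1 c1 d1 h1 ha hb1
  have hd2 := dvd_d l a b2 c2 d2 h2 ha hb2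
  have h3 : a * (d2 - d1 * b2 * c2) - (b1 * b2) * (- c1 * c2) = 1 := by
    linear_combination h2 - b2 * c2 * h1
  have hb3 : l ∣ b1 * b2 := Dvd.dvd.mul_left hb2 _
  have hc3 : l ∣ - c1 * c2 := Dvd.dvd.mul_left hc2 _
  have hd3 := dvd_d l _ _ _ _ h3 ha hb3
  refine ⟨ha, hb3, _, _, h3, hc3, ?_⟩
  rw [← F02 F l hF _ _ _ _ h3 ha hb3 hc3 hd3, ← F12 F l hF _ _ _ _ h2 ha hb2 hc2 hd2]
  have e : B01 a b1 c1 d1 h1 * B12 a b2 c2 d2 h2 * T 0 1 (by decide) (-b1) *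
      T 1 0 (by decide) (-c1) * T 1 2 (by decide) (-(d1 * b2)) =
      T 2 1 (by decide) c2 * B02 _ _ _ _ h3 := by
    apply Subtype.ext
    simp [T01, T10, T12, T21, B01c, B12c, B02c]
    have k1 : -(a * b1) + b1 * a = 0 := by ring
    have k2 : -(c1 * b1) + d1 * a = 1 := by linear_combination h1
    rw [k2]
    refine ⟨⟨Or.inl k1, k1, Or.inl k1⟩, ⟨?_, rfl, ?_⟩, ?_, ?_⟩ <;> ring
  have e' := congrArg F e
  simp only [map_mul] at e'
  rw [hF 0 1 _ _ (by simpa using hb1), hF 1 0 _ _ (by simpa using hc1),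
    hF 1 2 _ _ (by rw [dvd_neg]; exact Dvd.dvd.mul_left hb2 _), hF 2 1 _ _ hc2] at e'
  simpa using e'.symm

omit hF in
theorem R_one (b : ℤ) (hb : l ∣ b) (hF : ∀ (i j : Fin 3) (h : i ≠ j) (c : ℤ), l ∣ c → F (T i j h c) = 1) :
    R F l 1 b 1 := by
  refine ⟨by simp, hb, 0, 1, by ring, by simp, ?_⟩
  rw [← hF 0 1 (by decide) b hb]
  congr 1
  apply Subtype.ext
  simp [T01, B01c]


omit hF in
/-- reduced symbol -/
def R' (F : SpecialLinearGroup (Fin 3) ℤ →* Q) (l : ℤ) (a b : ℤ) (g : Q) : Prop :=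
  R F l a (l * b) g

theorem R'_one {a : ℤ} (ha : l ∣ a - 1) : R' F l a 1 1 := by
  obtain ⟨k, hk⟩ := ha
  have := R_adda F l hF (R_one F l (l * 1) (by simp) hF) k
  have e : 1 + k * (l * 1) = a := by linear_combination -hk
  rwa [e] at this

theorem R'_neg_one {a : ℤ} (ha : l ∣ a - 1) : R' F l a (-1) 1 := by
  obtain ⟨k, hk⟩ := ha
  have := R_adda F l hF (R_one F l (l * (-1)) (by simp) hF) (-k)
  have e : 1 + (-k) * (l * (-1)) = a := by linear_combination -hk
  rwa [e] at this

theorem R'_mul {a b1 b2 : ℤ} {g1 g2 : Q} (h1 : R' F l a b1 g1) (h2 : R' F l a b2 g2) :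
    R' F l a (b1 * b2) (g1 * g2) := by
  have ha := h1.1
  have c1 := R_coprime F l h1
  have c2 := R_coprime F l h2
  have c3 : IsCoprime a (l * (b1 * b2)) := by
    have := c1.mul_right c2.of_mul_right_right
    rwa [mul_assoc] at this
  obtain ⟨g, hg⟩ := R_exists F l a (l * (b1 * b2)) ha (by simp) c3
  have e1 := R_mul F l hF h1 h2
  have e2 := R_mul F l hF (R'_one F l hF ha) hg
  rw [show l * 1 * (l * (b1 * b2)) = l * b1 * (l * b2) by ring, one_mul] at e2
  rw [R_unique F l hF e1 e2]
  exact hg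

theorem R'_pow {a b : ℤ} {g : Q} (h : R' F l a b g) (k : ℕ) : R' F l a (b ^ k) (g ^ k) := by
  induction k with
  | zero => simpa using R'_one F l hF h.1
  | succ k ih => rw [pow_succ, pow_succ]; exact R'_mul F l hF ih h

theorem R'_congrb {a b b' : ℤ} {g : Q} (h : R' F l a b g) (hb : a ∣ b' - b) : R' F l a b' g := by
  obtain ⟨t, ht⟩ := hb
  have := R_addb F l hF h (l * t) (by simp)
  rwa [show l * b + l * t * a = l * b' by linear_combination (-l) * ht] at this

theorem R'_congra {a a' b : ℤ} {g : Q} (h : R' F l a b g) (ha : l * b ∣ a' - a) : R' F l a' b g := by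
  obtain ⟨t, ht⟩ := ha
  have := R_adda F l hF h t
  rwa [show a + t * (l * b) = a' by linear_combination -ht] at this

omit hF in
theorem dirichlet (m x : ℤ) (hm : m ≠ 0) (h : IsCoprime x m) (n : ℕ) :
    ∃ p : ℕ, n < p ∧ p.Prime ∧ m ∣ (p : ℤ) - x := by
  have : NeZero m.natAbs := ⟨by simpa using hm⟩
  have hu : IsUnit ((x : ℤ) : ZMod m.natAbs) := by
    obtain ⟨u, v, e⟩ := h
    refine IsUnit.of_mul_eq_one (u : ZMod m.natAbs) ?_
    have e' := congrArg (Int.cast : ℤ → ZMod m.natAbs) e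
    push_cast at e'
    have : (m : ZMod m.natAbs) = 0 := by
      rw [ZMod.intCast_zmod_eq_zero_iff_dvd]; simp
    rw [this, mul_zero, add_zero] at e'
    rw [mul_comm]; exact e'
  obtain ⟨p, hp, hpp, e⟩ := Nat.forall_exists_prime_gt_and_eq_mod hu n
  refine ⟨p, hp, hpp, ?_⟩
  rw [← Int.natAbs_dvd, ← ZMod.intCast_zmod_eq_zero_iff_dvd]
  push_cast
  rw [e, sub_self]

theorem R'_fermat {p : ℕ} (hp : p.Prime) {b : ℤ} {g : Q} (h : R' F l (-p) b g) :
    g ^ (p - 1) = 1 := by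
  have : Fact p.Prime := ⟨hp⟩
  have hc : IsCoprime (b : ℤ) p := by
    have := (R_coprime F l h).of_mul_right_right.symm
    exact (IsCoprime.neg_right_iff _ _).1 this
  have := Int.ModEq.pow_card_sub_one_eq_one hp hc
  have h1 := R'_pow F l hF h (p - 1)
  have h2 := R'_congrb F l hF h1 (b' := 1) (by
    rw [neg_dvd]
    exact Int.modEq_iff_dvd.1 this)
  exact R_unique F l hF h2 (R'_one F l hF h.1)

theorem R'_half {p : ℕ} (hp : p.Prime) {b : ℤ} {g : Q} (h : R' F l (-p) b g) :
    g ^ (p / 2) = 1 := by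
  have : Fact p.Prime := ⟨hp⟩
  have hc : IsCoprime (b : ℤ) p := by
    have := (R_coprime F l h).of_mul_right_right.symm
    exact (IsCoprime.neg_right_iff _ _).1 this
  have hb : (b : ZMod p) ≠ 0 := by
    intro h0
    rw [ZMod.intCast_zmod_eq_zero_iff_dvd] at h0
    have := hc.isUnit_of_dvd' h0 dvd_rfl
    exact (Nat.prime_iff_prime_int.1 hp).not_isUnit this
  have h1 := R'_pow F l hF h (p / 2)
  rcases ZMod.pow_div_two_eq_neg_one_or_one p hb with e | e
  · have h2 := R'_congrb F l hF h1 (b' := 1) (by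
      rw [neg_dvd, ← ZMod.intCast_zmod_eq_zero_iff_dvd]
      push_cast
      rw [e, sub_self])
    exact R_unique F l hF h2 (R'_one F l hF h.1)
  · have h2 := R'_congrb F l hF h1 (b' := -1) (by
      rw [neg_dvd, ← ZMod.intCast_zmod_eq_zero_iff_dvd]
      push_cast
      rw [e, sub_self])
    exact R_unique F l hF h2 (R'_neg_one F l hF h.1)

theorem R'_triv (hl : l ≠ 0) {a b : ℤ} {g : Q} (h : R' F l a b g) : g = 1 := by
  have hla := h.1
  have hab : IsCoprime a b := (R_coprime F l h).of_mul_right_right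
  have hal : IsCoprime a l := (R_coprime F l h).of_mul_right_left
  by_cases ha0 : a = 0
  · subst ha0
    rw [isCoprime_zero_left, Int.isUnit_iff] at hab
    rcases hab with rfl | rfl
    · exact R_unique F l hF h (R'_one F l hF hla)
    · exact R_unique F l hF h (R'_neg_one F l hF hla)
  by_cases ha1 : a = -1
  · exact R_unique F l hF (R'_congrb F l hF h (b' := 1) (by subst ha1; simp)) (R'_one F l hF hla)
  obtain ⟨q, hq, hqp, hqb⟩ := dirichlet a b ha0 hab.symm (a.natAbs + 2)
  have hq' : |a| + 2 < q := by
    have : ((a.natAbs + 2 : ℕ) : ℤ) < q := by exact_mod_cast hq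
    push_cast at this
    exact this
  have h := R'_congrb F l hF h hqb
  have hqP := Nat.prime_iff_prime_int.1 hqp
  have haq : IsCoprime a q := (R_coprime F l h).of_mul_right_right
  have hq0 : (q : ℤ) ≠ 0 := by have := abs_nonneg a; omega
  have hqodd : Odd (q : ℤ) := by
    have := hqp.odd_of_ne_two (by omega)
    exact_mod_cast this
  -- first prime
  obtain ⟨a', ha'1, ha'2⟩ : ∃ a' : ℤ, l * q ∣ a' - a ∧ (4 : ℤ) ∣ a' - 1 := by
    have key : ∃ t : ℤ, (4 : ℤ) ∣ a + l * q * t - 1 := by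
      obtain ⟨k, hk⟩ := hla
      obtain ⟨j, hj⟩ := hqodd
      refine ⟨-k * q, ?_⟩
      have : a = l * k + 1 := by linarith
      refine ⟨-l * k * (j ^ 2 + j), ?_⟩
      rw [this, hj]; ring
    obtain ⟨t, ht⟩ := key
    exact ⟨a + l * q * t, ⟨t, by ring⟩, ht⟩
  have h := R'_congra F l hF h ha'1
  have ca' : IsCoprime (-a') (4 * (l * q)) := by
    refine IsCoprime.neg_left (IsCoprime.mul_right ?_ (R_coprime F l h))
    obtain ⟨k, hk⟩ := ha'2
    exact ⟨1, -k, by linear_combination hk⟩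
  obtain ⟨p, -, hp, hpm⟩ := dirichlet (4 * (l * q)) (-a') (mul_ne_zero (by norm_num) (mul_ne_zero hl hq0)) ca' 2
  have h0 := R'_half F l hF hp (R'_congra F l hF h (a' := -p) (by
    rw [show -(p:ℤ) - a' = -(p - -a') by ring, dvd_neg]
    exact dvd_trans (Dvd.intro_left _ rfl) hpm))
  obtain ⟨m, hm⟩ : ∃ m : ℕ, p / 2 = m := ⟨_, rfl⟩
  rw [hm] at h0
  -- p mod 4
  have hp4 : (4 : ℤ) ∣ p + 1 := by
    have h1 : (4 : ℤ) ∣ (p : ℤ) - -a' := dvd_trans (Dvd.intro _ rfl) hpm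
    omega
  have hpm2 : (p : ℤ) = 2 * m + 1 := by omega
  have hmodd : IsCoprime (2 : ℤ) m := by
    exact ⟨-(m / 2 : ℤ), 1, by omega⟩
  have hpa : l * q ∣ (p : ℤ) + a := by
    have h1 : l * q ∣ (p : ℤ) - -a' := dvd_trans (Dvd.intro_left _ rfl) hpm
    have := dvd_sub h1 ha'1
    rwa [show (p : ℤ) - -a' - (a' - a) = p + a by ring] at this
  have hml : IsCoprime (m : ℤ) l := by
    -- 2m = p - 1 ≡ -a - 1 ≡ -2 mod l
    obtain ⟨s, hs⟩ := dvd_trans (Dvd.intro _ rfl) hpa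
    obtain ⟨k, hk⟩ := hla
    -- 2 * (m + 1) = l * (s - k)
    have e : 2 * (m + 1 : ℤ) = l * (s - k) := by linear_combination hs - hpm2 - hk
    rw [Int.isCoprime_iff_gcd_eq_one]
    by_contra hne
    obtain ⟨r, hr, hrd⟩ := Nat.exists_prime_and_dvd hne
    have hr' : (r : ℤ) ∣ (Int.gcd m l : ℤ) := by exact_mod_cast hrd
    have r1 : (r : ℤ) ∣ m := dvd_trans hr' (Int.gcd_dvd_left ..)
    have r2 : (r : ℤ) ∣ l := dvd_trans hr' (Int.gcd_dvd_right ..)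
    have r3 : (r : ℤ) ∣ 2 := by
      have := dvd_sub (Dvd.dvd.mul_right r2 (s - k)) (Dvd.dvd.mul_left r1 2)
      rwa [← e, show 2 * (m + 1 : ℤ) - 2 * m = 2 by ring] at this
    exact (Nat.prime_iff_prime_int.1 hr).not_isUnit (hmodd.isUnit_of_dvd' r3 r1)
  have hmq : IsCoprime (m : ℤ) q := by
    refine ((Prime.coprime_iff_not_dvd hqP).2 fun hd => ?_).symm
    have h1 : (q : ℤ) ∣ p + a := dvd_trans (Dvd.intro_left _ rfl) hpa
    have h2 : (q : ℤ) ∣ a + 1 := by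
      have := dvd_sub h1 (Dvd.dvd.mul_left hd 2)
      rwa [hpm2, show (2 * m + 1 + a - 2 * m : ℤ) = a + 1 by ring] at this
    have h3 := Int.le_of_dvd (a := (q : ℤ)) (b := |a + 1|) (abs_pos.2 (by omega)) ((dvd_abs _ _).2 h2)
    have := abs_add_le a 1
    rw [abs_one] at this
    omega
  have hmlq : IsCoprime (m : ℤ) (l * q) := hml.mul_right hmq
  -- CRT
  obtain ⟨x, hx1, hx2⟩ : ∃ x : ℤ, l * q ∣ x + a ∧ (m : ℤ) ∣ x + 1 := by
    obtain ⟨u, v, e⟩ := hmlq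
    refine ⟨-a * (u * m) - v * (l * q), ⟨(a - 1) * v, ?_⟩, ⟨u * (1 - a), ?_⟩⟩
    · linear_combination (-a) * e
    · linear_combination -e
  have cx : IsCoprime x ((l * q) * m) := by
    refine IsCoprime.mul_right ?_ ?_
    · obtain ⟨t, ht⟩ := hx1
      obtain ⟨u, v, e⟩ := hal.mul_right haq
      refine ⟨-u, v + u * t, ?_⟩
      linear_combination e - u * ht
    · obtain ⟨t, ht⟩ := hx2
      exact ⟨-1, t, by linear_combination -ht⟩
  have hm0 : (m : ℤ) ≠ 0 := by have := hp.two_le; omega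
  obtain ⟨p1, -, hp1, hpm1⟩ := dirichlet (l * q * m) x (mul_ne_zero (mul_ne_zero hl hq0) hm0) cx 2
  have h1 := R'_fermat F l hF hp1 (R'_congra F l hF h (a' := -p1) (by
    have k1 : l * q ∣ (p1 : ℤ) - x := dvd_trans (Dvd.intro _ rfl) hpm1
    have := dvd_add (dvd_add k1 hx1) ha'1
    rw [show -(p1:ℤ) - a' = -(p1 - x + (x + a) + (a' - a)) by ring, dvd_neg]
    exact this))
  have hcop : Nat.Coprime m (p1 - 1) := by
    rw [← Nat.isCoprime_iff_coprime]
    have k2 : (m : ℤ) ∣ (p1 : ℤ) + 1 := by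
      have := dvd_add (dvd_trans (Dvd.intro_left _ rfl) hpm1) hx2
      rwa [show (p1 : ℤ) - x + (x + 1) = p1 + 1 by ring] at this
    obtain ⟨t, ht⟩ := k2
    obtain ⟨u, v, e⟩ := hmodd
    rw [Nat.cast_sub hp1.one_le]
    push_cast
    refine ⟨v + u * t, -u, ?_⟩
    linear_combination e - u * ht
  have := Nat.dvd_gcd (orderOf_dvd_of_pow_eq_one h0) (orderOf_dvd_of_pow_eq_one h1)
  rw [hcop] at this
  exact orderOf_eq_one_iff.1 (Nat.dvd_one.1 this)

theorem F_triv (hl : l ≠ 0) (a b c d : ℤ) (h : a * d - b * c = 1) (ha : l ∣ a - 1) (hb : l ∣ b)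
    (hc : l ∣ c) : F (B01 a b c d h) = 1 := by
  obtain ⟨b', rfl⟩ := hb
  exact R'_triv F l hF hl (a := a) (b := b') ⟨ha, by simp, c, d, h, hc, rfl⟩

end A

section B
variable {ι : Type*} [Fintype ι] [DecidableEq ι]

theorem mulT (g : SpecialLinearGroup ι ℤ) (i j : ι) (h : i ≠ j) (c : ℤ) (r s : ι) :
    (g * T i j h c).1 r s = g.1 r s + if s = j then c * g.1 r i else 0 := by
  change (g.1 * transvection i j c) r s = _
  split_ifs with hs
  · subst hs; rw [mul_transvection_apply_same]
  · rw [mul_transvection_apply_of_ne _ _ _ _ hs, add_zero]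

theorem Tmul (g : SpecialLinearGroup ι ℤ) (i j : ι) (h : i ≠ j) (c : ℤ) (r s : ι) :
    (T i j h c * g).1 r s = g.1 r s + if r = i then c * g.1 j s else 0 := by
  change (transvection i j c * g.1) r s = _
  split_ifs with hs
  · subst hs; rw [transvection_mul_apply_same]
  · rw [transvection_mul_apply_of_ne _ _ _ _ hs, add_zero]

/-- the principal congruence subgroup -/
def Gam (ι : Type*) [Fintype ι] [DecidableEq ι] (l : ℕ) : Subgroup (SpecialLinearGroup ι ℤ) :=
  (SpecialLinearGroup.map (n := ι) (Int.castRingHom (ZMod l))).ker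

instance (l : ℕ) : (Gam ι l).Normal := by unfold Gam; infer_instance

theorem mem_Gam (l : ℕ) (g : SpecialLinearGroup ι ℤ) :
    g ∈ Gam ι l ↔ ∀ r s, (l : ℤ) ∣ g.1 r s - (1 : Matrix ι ι ℤ) r s := by
  have key : ∀ r s, ((l : ℤ) ∣ g.1 r s - (1 : Matrix ι ι ℤ) r s ↔
      ((g.1 r s : ℤ) : ZMod l) = (1 : Matrix ι ι (ZMod l)) r s) := by
    intro r s
    rw [← ZMod.intCast_zmod_eq_zero_iff_dvd, Int.cast_sub, sub_eq_zero]
    simp [Matrix.one_apply]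
  simp only [key]
  constructor
  · intro h r s
    have h' : SpecialLinearGroup.map (n := ι) (Int.castRingHom (ZMod l)) g = 1 := h
    have := congrArg (fun x : SpecialLinearGroup ι (ZMod l) => x.1 r s) h'
    simpa using this
  · intro h
    change SpecialLinearGroup.map (n := ι) (Int.castRingHom (ZMod l)) g = 1
    apply Subtype.ext
    ext r s
    simpa using h r s

theorem T_mem_Gam (l : ℕ) (i j : ι) (h : i ≠ j) (c : ℤ) (hc : (l : ℤ) ∣ c) :
    T i j h c ∈ Gam ι l := by
  rw [mem_Gam]
  intro r s
  have := Tmul 1 i j h c r s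
  rw [mul_one] at this
  rw [this]
  change _ ∣ (1 : Matrix ι ι ℤ) r s + _ - _
  rw [add_sub_cancel_left]
  split_ifs
  · exact Dvd.dvd.mul_right hc _
  · simp

/-- support condition -/
def Sup (S : Finset ι) (g : SpecialLinearGroup ι ℤ) : Prop :=
  ∀ r s, (r ∉ S ∨ s ∉ S) → g.1 r s = (1 : Matrix ι ι ℤ) r s

theorem Sup_mulT {S : Finset ι} {g : SpecialLinearGroup ι ℤ} (hg : Sup S g) {i j : ι} (h : i ≠ j)
    (hi : i ∈ S) (hj : j ∈ S) (c : ℤ) : Sup S (g * T i j h c) := by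
  intro r s hrs
  rw [mulT, hg r s hrs]
  split_ifs with hs
  · subst hs
    have hr : r ∉ S := by tauto
    have e : (1 : Matrix ι ι ℤ) r i = 0 := Matrix.one_apply_ne (by rintro rfl; exact hr hi)
    rw [hg r i (Or.inl hr), e]
    simp
  · simp

theorem Sup_Tmul {S : Finset ι} {g : SpecialLinearGroup ι ℤ} (hg : Sup S g) {i j : ι} (h : i ≠ j)
    (hi : i ∈ S) (hj : j ∈ S) (c : ℤ) : Sup S (T i j h c * g) := by
  intro r s hrs
  rw [Tmul, hg r s hrs]
  split_ifs with hs
  · subst hs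
    have hr : s ∉ S := by tauto
    have e : (1 : Matrix ι ι ℤ) j s = 0 := Matrix.one_apply_ne (by rintro rfl; exact hr hj)
    rw [hg j s (Or.inr hr), e]
    simp
  · simp

variable (N : Subgroup (SpecialLinearGroup ι ℤ)) [hNn : N.Normal] (l : ℕ)
  (hN : ∀ (i j : ι) (h : i ≠ j) (c : ℤ), (l : ℤ) ∣ c → T i j h c ∈ N)

omit [Fintype ι] in
theorem one_ne {i j : ι} (h : i ≠ j) : (1 : Matrix ι ι ℤ) i j = 0 := Matrix.one_apply_ne h

theorem conj_mem' {g : SpecialLinearGroup ι ℤ} {i j : ι} (h : i ≠ j) (c : ℤ)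
    (hg : T i j h (-c) * g * T i j h c ∈ N) : g ∈ N := by
  have := hNn.conj_mem _ hg (T i j h c)
  rw [T_neg] at this
  convert this using 1
  group

theorem conj_Gam {g : SpecialLinearGroup ι ℤ} {i j : ι} (h : i ≠ j) (c : ℤ)
    (hg : g ∈ Gam ι l) : T i j h (-c) * g * T i j h c ∈ Gam ι l := by
  have := (inferInstance : (Gam ι l).Normal).conj_mem _ hg (T i j h c)⁻¹
  rwa [inv_inv, ← T_neg] at this

include hN

theorem colClear (S : Finset ι) (k : ι) (hk : k ∈ S)
    (IH : ∀ g ∈ Gam ι l, Sup (S.erase k) g → g ∈ N) (R : Finset ι) :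
    ∀ g ∈ Gam ι l, Sup S g → (∀ s, g.1 k s = (1 : Matrix ι ι ℤ) k s) →
      (∀ r, r ≠ k → r ∉ R → g.1 r k = 0) → g ∈ N := by
  induction R using Finset.induction_on with
  | empty =>
    intro g hg hS hrow hcol
    refine IH g hg fun r s hrs => ?_
    by_cases hr : r = k
    · subst hr; exact hrow s
    by_cases hs : s = k
    · subst hs; rw [hcol r hr (by simp), one_ne hr]
    · apply hS
      simpa [hr, hs] using hrs
  | insert i R hi ih =>
    intro g hg hS hrow hcol
    by_cases hik : i = k
    · refine ih g hg hS hrow fun r hr hrR => hcol r hr ?_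
      rw [Finset.mem_insert]; rintro (rfl | h)
      · exact hr hik
      · exact hrR h
    by_cases hiS : i ∈ S
    swap
    · refine ih g hg hS hrow fun r hr hrR => ?_
      by_cases hri : r = i
      · subst hri; rw [hS r k (Or.inl hiS), one_ne hr]
      · exact hcol r hr (by simp [hri, hrR])
    have hd : (l : ℤ) ∣ - g.1 i k := by
      have := (mem_Gam l g).1 hg i k
      rw [one_ne hik, sub_zero] at this
      exact (dvd_neg).2 this
    have hT := hN i k hik _ hd
    rw [← Subgroup.mul_mem_cancel_left N hT]
    refine ih _ ((Gam ι l).mul_mem (T_mem_Gam l i k hik _ hd) hg) (Sup_Tmul hS hik hiS hk _) ?_ ?_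
    · intro s
      rw [Tmul, if_neg (Ne.symm hik), add_zero, hrow]
    · intro r hr hrR
      rw [Tmul]
      split_ifs with hri
      · subst hri; rw [hrow k, Matrix.one_apply_eq]; ring
      · rw [add_zero]; exact hcol r hr (by simp [hri, hrR])

theorem rowClear (S : Finset ι) (k : ι) (hk : k ∈ S)
    (IH : ∀ g ∈ Gam ι l, Sup (S.erase k) g → g ∈ N) (R : Finset ι) :
    ∀ g ∈ Gam ι l, Sup S g → g.1 k k = 1 →
      (∀ r, r ≠ k → r ∉ R → g.1 k r = 0) → g ∈ N := by
  induction R using Finset.induction_on with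
  | empty =>
    intro g hg hS hkk hrow
    refine colClear N l hN S k hk IH Finset.univ g hg hS (fun s => ?_) (by simp)
    by_cases hs : s = k
    · subst hs; rw [hkk, Matrix.one_apply_eq]
    · rw [hrow s hs (by simp), one_ne (Ne.symm hs)]
  | insert i R hi ih =>
    intro g hg hS hkk hrow
    by_cases hik : i = k
    · refine ih g hg hS hkk fun r hr hrR => hrow r hr ?_
      rw [Finset.mem_insert]; rintro (rfl | h)
      · exact hr hik
      · exact hrR h
    by_cases hiS : i ∈ S
    swap
    · refine ih g hg hS hkk fun r hr hrR => ?_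
      by_cases hri : r = i
      · subst hri; rw [hS k r (Or.inr hiS), one_ne (Ne.symm hr)]
      · exact hrow r hr (by simp [hri, hrR])
    have hki : k ≠ i := Ne.symm hik
    have hd : (l : ℤ) ∣ - g.1 k i := by
      have := (mem_Gam l g).1 hg k i
      rw [one_ne hki, sub_zero] at this
      exact (dvd_neg).2 this
    have hT := hN k i hki _ hd
    rw [← Subgroup.mul_mem_cancel_right N hT]
    refine ih _ ((Gam ι l).mul_mem hg (T_mem_Gam l k i hki _ hd)) (Sup_mulT hS hki hk hiS _) ?_ ?_
    · rw [mulT, if_neg hki, add_zero, hkk]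
    · intro r hr hrR
      rw [mulT]
      split_ifs with hri
      · subst hri; rw [hkk]; ring
      · rw [add_zero]; exact hrow r hr (by simp [hri, hrR])

theorem twoStep (S : Finset ι) (k p q : ι) (hk : k ∈ S) (hp : p ∈ S) (hq : q ∈ S)
    (hpk : p ≠ k) (hqk : q ≠ k) (hpq : p ≠ q)
    (IH : ∀ g ∈ Gam ι l, Sup (S.erase k) g → g ∈ N)
    (g) (hg : g ∈ Gam ι l) (hS : Sup S g) (h0 : ∀ s, s ≠ k → s ≠ p → g.1 k s = 0) : g ∈ N := by
  obtain ⟨m, hm⟩ := (mem_Gam l g).1 hg k k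
  obtain ⟨d, hd⟩ := (mem_Gam l g).1 hg k p
  rw [Matrix.one_apply_eq] at hm
  rw [one_ne hpk.symm, sub_zero] at hd
  obtain ⟨u, v, huv⟩ : ∃ u v : ℤ, g.1 k p * u + g.1 k k * v = 1 := by
    have h1 : (g.1 * (g⁻¹).1) k k = 1 := by
      have : (g * g⁻¹).1 k k = 1 := by rw [mul_inv_cancel]; exact Matrix.one_apply_eq k
      exact this
    rw [Matrix.mul_apply, ← Finset.sum_subset (Finset.subset_univ {p, k}),
      Finset.sum_pair hpk] at h1
    · exact ⟨_, _, h1⟩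
    · intro s _ hs
      simp only [Finset.mem_insert, Finset.mem_singleton, not_or] at hs
      rw [h0 s hs.2 hs.1, zero_mul]
  have hT1 := hN k q hqk.symm l dvd_rfl
  have hx : (l : ℤ) ∣ -m * l * u := ⟨-m * u, by ring⟩
  have hT2 := hN p k hpk (-m * l * u) hx
  rw [← Subgroup.mul_mem_cancel_right N hT1]
  apply conj_mem' N hqk (-m * v)
  rw [← Subgroup.mul_mem_cancel_right N hT2]
  refine rowClear N l hN S k hk IH Finset.univ _ ?_ ?_ ?_ (by simp)
  · exact (Gam ι l).mul_mem (conj_Gam l hqk _ ((Gam ι l).mul_mem hg (T_mem_Gam l _ _ _ _ dvd_rfl)))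
      (T_mem_Gam l _ _ _ _ hx)
  · exact Sup_mulT (Sup_mulT (Sup_Tmul (Sup_mulT hS _ hk hq _) _ hq hk _) _ hq hk _) _ hp hk _
  · simp only [mulT, Tmul, if_neg hqk.symm, if_neg hpk, if_neg hpq, if_neg hqk, if_neg hpk.symm,
      if_true, h0 q hqk hpq.symm, hd]
    rw [hd] at huv
    linear_combination hm - l * m * huv

theorem descent (S : Finset ι) (k : ι) (hk : k ∈ S) (hc : 2 ≤ (S.erase k).card)
    (IH : ∀ g ∈ Gam ι l, Sup (S.erase k) g → g ∈ N) (n : ℕ) :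
    ∀ g ∈ Gam ι l, Sup S g → ∑ s ∈ S.erase k, (g.1 k s).natAbs = n → g ∈ N := by
  induction n using Nat.strong_induction_on with
  | _ n ih =>
  intro g hg hS hn
  by_cases hex : ∃ i ∈ S.erase k, ∃ j ∈ S.erase k, i ≠ j ∧ g.1 k i ≠ 0 ∧
      (g.1 k i).natAbs ≤ (g.1 k j).natAbs
  · obtain ⟨i, hi, j, hj, hij, hi0, hle⟩ := hex
    obtain ⟨hik, hiS⟩ := Finset.mem_erase.1 hi
    obtain ⟨hjk, hjS⟩ := Finset.mem_erase.1 hj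
    obtain ⟨c, hcc⟩ : ∃ c : ℤ, (g.1 k j + c * g.1 k i).natAbs < (g.1 k j).natAbs := by
      by_cases h1 : 0 ≤ g.1 k i * g.1 k j
      · refine ⟨-1, ?_⟩
        rcases mul_nonneg_iff.1 h1 with h | h <;> omega
      · refine ⟨1, ?_⟩
        rcases mul_neg_iff.1 (not_le.1 h1) with h | h <;> omega
    apply conj_mem' N hij c
    refine ih _ ?_ _ (conj_Gam l hij c hg) (Sup_mulT (Sup_Tmul hS _ hiS hjS _) _ hiS hjS _) rfl
    rw [← hn]
    apply Finset.sum_lt_sum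
    · intro s hs
      simp only [mulT, Tmul, if_neg hik.symm, add_zero]
      split_ifs with hsj
      · subst hsj; exact hcc.le
      · simp
    · refine ⟨j, hj, ?_⟩
      simpa only [mulT, Tmul, if_neg hik.symm, add_zero, if_true] using hcc
  · push Not at hex
    -- choose p with maximal entry
    obtain ⟨p, hp, hmax⟩ := Finset.exists_max_image (S.erase k) (fun s => (g.1 k s).natAbs)
      (Finset.card_pos.1 (by omega))
    obtain ⟨q, hq, hqp⟩ := Finset.exists_mem_ne (by omega : 1 < (S.erase k).card) p
    obtain ⟨hpk, hpS⟩ := Finset.mem_erase.1 hp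
    obtain ⟨hqk, hqS⟩ := Finset.mem_erase.1 hq
    refine twoStep N l hN S k p q hk hpS hqS hpk hqk hqp.symm IH g hg hS fun s hsk hsp => ?_
    by_cases hsS : s ∈ S
    · by_contra h0
      have hs : s ∈ S.erase k := Finset.mem_erase.2 ⟨hsk, hsS⟩
      exact absurd (hmax s hs) (not_le.2 (hex s hs p hp hsp h0))
    · rw [hS k s (Or.inr hsS), one_ne hsk.symm]

theorem reduceAll (p q : ι) (hpq : p ≠ q)
    (base : ∀ g ∈ Gam ι l, Sup {p, q} g → g ∈ N) (n : ℕ) :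
    ∀ S : Finset ι, S.card = n → p ∈ S → q ∈ S → ∀ g ∈ Gam ι l, Sup S g → g ∈ N := by
  induction n with
  | zero => intro S h hp; rw [Finset.card_eq_zero] at h; subst h; simp at hp
  | succ n ih =>
    intro S h hp hq
    have hsub : ({p, q} : Finset ι) ⊆ S := by
      intro x hx; simp at hx; rcases hx with rfl | rfl <;> assumption
    by_cases hS : S = {p, q}
    · subst hS; exact base
    obtain ⟨k, hk, hk'⟩ := Finset.exists_of_ssubset (hsub.ssubset_of_ne (Ne.symm hS))
    have hpk : p ≠ k := by rintro rfl; simp at hk'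
    have hqk : q ≠ k := by rintro rfl; simp at hk'
    have hp' : p ∈ S.erase k := Finset.mem_erase.2 ⟨hpk, hp⟩
    have hq' : q ∈ S.erase k := Finset.mem_erase.2 ⟨hqk, hq⟩
    intro g hg hSg
    refine descent N l hN S k hk ?_ (ih (S.erase k) (by rw [Finset.card_erase_of_mem hk]; omega) hp' hq')
      _ g hg hSg rfl
    exact Finset.one_lt_card.2 ⟨p, hp', q, hq', hpq⟩

end B

section D
variable {ι κ : Type*} [Fintype ι] [DecidableEq ι] [Fintype κ] [DecidableEq κ]

/-- block embedding of `SL_3` -/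
def psi (e : Fin 3 ⊕ κ ≃ ι) : SpecialLinearGroup (Fin 3) ℤ →* SpecialLinearGroup ι ℤ where
  toFun M := ⟨reindex e e (fromBlocks M.1 0 0 1), by
    rw [det_reindex_self, det_fromBlocks_zero₂₁, M.2, det_one, one_mul]⟩
  map_one' := by
    apply Subtype.ext
    change reindex e e (fromBlocks 1 0 0 1) = 1
    rw [fromBlocks_one]; simp
  map_mul' M M' := by
    apply Subtype.ext
    change reindex e e (fromBlocks (M.1 * M'.1) 0 0 1) =
      reindex e e (fromBlocks M.1 0 0 1) * reindex e e (fromBlocks M'.1 0 0 1)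
    simp only [reindex_apply]
    rw [submatrix_mul_equiv, fromBlocks_multiply]
    simp

theorem psi_T (e : Fin 3 ⊕ κ ≃ ι) (i j : Fin 3) (h : i ≠ j) (c : ℤ) :
    psi e (T i j h c) = T (e (Sum.inl i)) (e (Sum.inl j)) (by simpa using h) c := by
  apply Subtype.ext
  have := TransvectionStruct.toMatrix_sumInl κ (⟨i, j, h, c⟩ : TransvectionStruct (Fin 3) ℤ)
  change reindex e e (fromBlocks (transvection i j c) 0 0 1) = transvection _ _ c
  have h2 := TransvectionStruct.toMatrix_reindexEquiv e
    (TransvectionStruct.sumInl κ (⟨i, j, h, c⟩ : TransvectionStruct (Fin 3) ℤ))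
  rw [this] at h2
  exact h2.symm

theorem base (e : Fin 3 ⊕ κ ≃ ι) (N : Subgroup (SpecialLinearGroup ι ℤ)) [hNn : N.Normal] (l : ℕ)
    (hl : l ≠ 0)
    (hN : ∀ (i j : ι) (h : i ≠ j) (c : ℤ), (l : ℤ) ∣ c → T i j h c ∈ N)
    (g) (hg : g ∈ Gam ι l) (hS : Sup {e (Sum.inl 0), e (Sum.inl 1)} g) : g ∈ N := by
  set a := g.1 (e (Sum.inl 0)) (e (Sum.inl 0)) with ha
  set b := g.1 (e (Sum.inl 0)) (e (Sum.inl 1)) with hb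
  set c := g.1 (e (Sum.inl 1)) (e (Sum.inl 0)) with hc
  set d := g.1 (e (Sum.inl 1)) (e (Sum.inl 1)) with hd
  have eg : g.1 = reindex e e (fromBlocks !![a, b, 0; c, d, 0; 0, 0, 1] 0 0 1) := by
    ext r s
    obtain ⟨r, rfl⟩ := e.surjective r
    obtain ⟨s, rfl⟩ := e.surjective s
    rw [reindex_apply, submatrix_apply, e.symm_apply_apply, e.symm_apply_apply]
    by_cases hrs : (e r ∉ ({e (Sum.inl 0), e (Sum.inl 1)} : Finset ι) ∨
        e s ∉ ({e (Sum.inl 0), e (Sum.inl 1)} : Finset ι))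
    · rw [hS _ _ hrs]
      rcases r with r | r <;> rcases s with s | s
      · fin_cases r <;> fin_cases s <;> simp [Matrix.one_apply] at hrs ⊢
      · simp [Matrix.one_apply]
      · simp [Matrix.one_apply]
      · simp [Matrix.one_apply]
    · simp only [Finset.mem_insert, Finset.mem_singleton, not_or, not_not,
        EmbeddingLike.apply_eq_iff_eq] at hrs
      obtain ⟨hr, hs⟩ : (r = Sum.inl 0 ∨ r = Sum.inl 1) ∧ (s = Sum.inl 0 ∨ s = Sum.inl 1) := by
        tauto
      rcases hr with rfl | rfl <;> rcases hs with rfl | rfl <;> simp [ha, hb, hc, hd]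
  have hdet : a * d - b * c = 1 := by
    have := g.2
    rw [eg, det_reindex_self, det_fromBlocks_zero₂₁, det_one, mul_one] at this
    simp [det_fin_three] at this
    linarith
  have e2 : g = psi e (B01 a b c d hdet) := Subtype.ext eg
  rw [mem_Gam] at hg
  have h01 : e (Sum.inl 0) ≠ e (Sum.inl (1 : Fin 3)) := by simp
  have ga := hg (e (Sum.inl 0)) (e (Sum.inl 0))
  have gb := hg (e (Sum.inl 0)) (e (Sum.inl 1))
  have gc := hg (e (Sum.inl 1)) (e (Sum.inl 0))
  rw [Matrix.one_apply_eq] at ga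
  rw [one_ne h01, sub_zero] at gb
  rw [one_ne h01.symm, sub_zero] at gc
  have := F_triv ((QuotientGroup.mk' N).comp (psi e)) (l : ℤ) (by
    intro i j h x hx
    rw [MonoidHom.comp_apply, psi_T]
    exact (QuotientGroup.eq_one_iff _).2 (hN _ _ _ _ hx)) (by exact_mod_cast hl) a b c d hdet ga gb gc
  rw [MonoidHom.comp_apply, ← e2] at this
  exact (QuotientGroup.eq_one_iff _).1 this

theorem comm_T (i j k : ι) (hij : i ≠ j) (hjk : j ≠ k) (hik : i ≠ k) (x y : ℤ) :
    T i j hij x * T j k hjk y = T i k hik (x * y) * T j k hjk y * T i j hij x := by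
  apply Subtype.ext
  change transvection i j x * transvection j k y =
    transvection i k (x * y) * transvection j k y * transvection i j x
  simp [transvection, mul_add, add_mul, hij, hjk, hik, hij.symm, hjk.symm, hik.symm]
  abel

theorem T_right (N : Subgroup (SpecialLinearGroup ι ℤ)) [hNn : N.Normal] (i j k : ι) (hij : i ≠ j)
    (hjk : j ≠ k) (hik : i ≠ k) (x y : ℤ) (h : T i j hij x ∈ N) : T i k hik (x * y) ∈ N := by
  have e : T i k hik (x * y) =
      T i j hij x * (T j k hjk y * (T i j hij x)⁻¹ * (T j k hjk y)⁻¹) := by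
    rw [← mul_assoc, ← mul_assoc, comm_T i j k hij hjk hik]; group
  rw [e]
  exact N.mul_mem h (hNn.conj_mem _ (N.inv_mem h) _)

theorem T_left (N : Subgroup (SpecialLinearGroup ι ℤ)) [hNn : N.Normal] (i j k : ι) (hij : i ≠ j)
    (hjk : j ≠ k) (hik : i ≠ k) (x y : ℤ) (h : T j k hjk x ∈ N) : T i k hik (x * y) ∈ N := by
  have e : T i k hik (x * y) =
      (T i j hij y * T j k hjk x * (T i j hij y)⁻¹) * (T j k hjk x)⁻¹ := by
    rw [comm_T i j k hij hjk hik, mul_comm x y]; group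
  rw [e]
  exact N.mul_mem (hNn.conj_mem _ h _) (N.inv_mem h)

theorem all_T (N : Subgroup (SpecialLinearGroup ι ℤ)) [hNn : N.Normal] (o p q : ι) (hop : o ≠ p)
    (hoq : o ≠ q) (hpq : p ≠ q) (l : ℤ) (h : T o p hop l ∈ N) (i j : ι) (hij : i ≠ j) (c : ℤ)
    (hc : l ∣ c) : T i j hij c ∈ N := by
  obtain ⟨x, rfl⟩ := hc
  have P2 : ∀ x, T o q hoq (l * x) ∈ N := fun x => T_right N o p q hop hpq hoq l x h
  have P1 : ∀ x, T o p hop (l * x) ∈ N := fun x => by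
    simpa using T_right N o q p hoq hpq.symm hop _ 1 (P2 x)
  by_cases hip : i = p
  · subst hip
    have P3 : ∀ x, T i q hpq (l * x) ∈ N := fun x => by
      simpa using T_left N i o q hop.symm hoq hpq _ 1 (P2 x)
    by_cases hjq : j = q
    · subst hjq; exact P3 x
    · simpa using T_right N i q j hpq (Ne.symm hjq) hij _ 1 (P3 x)
  · have P3 : ∀ x, T i p hip (l * x) ∈ N := fun x => by
      by_cases hio : i = o
      · subst hio; exact P1 x
      · simpa using T_left N i o p hio hop hip _ 1 (P1 x)
    by_cases hjp : j = p
    · subst hjp; exact P3 x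
    · simpa using T_right N i p j hip (Ne.symm hjp) hij _ 1 (P3 x)

theorem T_pow (i j : ι) (h : i ≠ j) (c : ℤ) (m : ℕ) : T i j h c ^ m = T i j h (m * c) := by
  induction m with
  | zero => simp [T_zero]
  | succ m ih => rw [pow_succ, ih, ← T_add]; congr 1; push_cast; ring

end D
end Menn

/-- **Mennicke / Bass–Lazard–Serre.**  For `n ≥ 3` and `ℓ ≥ 1`, the principal congruence
subgroup `Γ_n(ℓ) = ker (SL_n(ℤ) → SL_n(ℤ/ℓℤ))` is the smallest normal subgroup of
`SL_n(ℤ)` containing `E^ℓ`, i.e. the normal closure of `{E^ℓ}`. -/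
theorem congruenceSubgroup_eq_normalClosure_pow_elementary (n ℓ : ℕ) (hℓ : 1 ≤ ℓ) :
    (Matrix.SpecialLinearGroup.map (n := Fin (n + 3))
        (Int.castRingHom (ZMod ℓ))).ker =
      Subgroup.normalClosure {Emat n ℤ ^ ℓ} := by
  have h01 : (0 : Fin (n + 3)) ≠ 1 := zero_ne_one
  have hE : Emat n ℤ ^ ℓ = Menn.T 0 1 h01 (ℓ : ℤ) := by
    have := Menn.T_pow (0 : Fin (n + 3)) 1 h01 1 ℓ
    rw [mul_one] at this
    exact this
  rw [hE]
  apply le_antisymm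
  · intro g hg
    have hmem : Menn.T 0 1 h01 (ℓ : ℤ) ∈
        Subgroup.normalClosure {Menn.T (0 : Fin (n + 3)) 1 h01 (ℓ : ℤ)} :=
      Subgroup.subset_normalClosure rfl
    have h02 : (0 : Fin (n + 3)) ≠ ⟨2, by omega⟩ := by simp [Fin.ext_iff]
    have h12 : (1 : Fin (n + 3)) ≠ ⟨2, by omega⟩ := by simp [Fin.ext_iff]
    have hN := Menn.all_T _ (0 : Fin (n + 3)) 1 _ h01 h02 h12 (ℓ : ℤ) hmem
    let e : Fin 3 ⊕ Fin n ≃ Fin (n + 3) := finSumFinEquiv.trans (finCongr (by omega))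
    exact Menn.reduceAll _ ℓ hN (e (Sum.inl 0)) (e (Sum.inl 1)) (by simp)
      (fun g hg hS => Menn.base e _ ℓ (by omega) hN g hg hS) _ Finset.univ rfl (Finset.mem_univ _)
      (Finset.mem_univ _) g hg (by intro r s h; simp at h)
  · apply Subgroup.normalClosure_le_normal
    rintro _ rfl
    exact Menn.T_mem_Gam ℓ 0 1 h01 _ dvd_rfl
end

section
/- Let p be prime, k ≥ 1, n ≥ 3, and let ρ : SL_n(ℤ/p^kℤ) → GL(V) be a finite-dimensional complex representation. If the element ρ(E_{1,2})^{p^{k-1}} acts trivially (equivalently, every eigenvalue of ρ(E_{1,2}) has order dividing p^{k-1}), then ρ factors through the reduction map SL_n(ℤ/p^kℤ) → SL_n(ℤ/p^{k-1}ℤ). -/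
open Matrix

section Helpers

variable {n : ℕ} {R : Type*} [CommRing R]

local notation "SLG" => Matrix.SpecialLinearGroup (Fin (n + 3)) R

theorem slext (A B : SLG) (h : SpecialLinearGroup.coeMonoidHom A = SpecialLinearGroup.coeMonoidHom B) : A = B :=
  Subtype.ext h

theorem slt {i j : Fin (n + 3)} (hij : i ≠ j) (b : R) :
    SpecialLinearGroup.coeMonoidHom (SpecialLinearGroup.transvection hij b) = 1 + single i j b := rfl

theorem aux_comm {i j l : Fin (n + 3)} (hij : i ≠ j) (hjl : j ≠ l) (hil : i ≠ l) (a b : R) :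
    SpecialLinearGroup.transvection hij a * SpecialLinearGroup.transvection hjl b *
      (SpecialLinearGroup.transvection hij a)⁻¹ * (SpecialLinearGroup.transvection hjl b)⁻¹
      = SpecialLinearGroup.transvection hil (a * b) := by
  rw [SpecialLinearGroup.transvection_inv, SpecialLinearGroup.transvection_inv]
  apply slext
  simp only [map_mul, slt]
  simp [mul_add, add_mul, ← single_neg, hij.symm, hjl.symm, hil.symm, hij, hjl, hil]
  abel

theorem aux_all (K : Subgroup SLG) [hK : K.Normal] (q : R)
    (h : SpecialLinearGroup.transvection (zero_ne_one : (0 : Fin (n + 3)) ≠ 1) q ∈ K) :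
    ∀ (i j : Fin (n + 3)) (hij : i ≠ j) (x : R),
      SpecialLinearGroup.transvection hij (q * x) ∈ K := by
  have right : ∀ {i j l : Fin (n + 3)} (hij : i ≠ j) (hjl : j ≠ l) (hil : i ≠ l) (a x : R),
      SpecialLinearGroup.transvection hij a ∈ K →
      SpecialLinearGroup.transvection hil (a * x) ∈ K := by
    intro i j l hij hjl hil a x ha
    rw [← aux_comm hij hjl hil a x, mul_assoc, mul_assoc, ← mul_assoc _ _ (_)⁻¹]
    exact K.mul_mem ha (hK.conj_mem _ (K.inv_mem ha) _)
  have left : ∀ {i j l : Fin (n + 3)} (hij : i ≠ j) (hjl : j ≠ l) (hil : i ≠ l) (b : R),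
      SpecialLinearGroup.transvection hjl b ∈ K →
      SpecialLinearGroup.transvection hil b ∈ K := by
    intro i j l hij hjl hil b hb
    have := aux_comm hij hjl hil 1 b
    rw [one_mul] at this
    rw [← this]
    exact K.mul_mem (hK.conj_mem _ hb _) (K.inv_mem hb)
  have h02 : (0 : Fin (n + 3)) ≠ 2 := by simp [Fin.ext_iff, Nat.mod_eq_of_lt (show 2 < n + 3 by omega)]
  have h12 : (1 : Fin (n + 3)) ≠ 2 := by simp [Fin.ext_iff, Nat.mod_eq_of_lt (show 2 < n + 3 by omega)]
  have s1 : ∀ x, SpecialLinearGroup.transvection h02 (q * x) ∈ K :=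
    fun x => right zero_ne_one h12 h02 q x h
  have s2 : ∀ (i : Fin (n + 3)) (hi : i ≠ 2) x,
      SpecialLinearGroup.transvection hi (q * x) ∈ K := by
    intro i hi x
    by_cases h0 : i = 0
    · subst h0; exact s1 x
    · exact left h0 h02 hi _ (s1 x)
  have s3 : ∀ (i j : Fin (n + 3)) (hi : i ≠ 2) (hij : i ≠ j) x,
      SpecialLinearGroup.transvection hij (q * x) ∈ K := by
    intro i j hi hij x
    by_cases hj : j = 2
    · subst hj; exact s2 i hi x
    · have := right hi (Ne.symm hj) hij _ 1 (s2 i hi x)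
      rwa [mul_one] at this
  intro i j hij x
  by_cases hi : i = 2
  · subst hi
    by_cases hj : j = 0
    · subst hj
      exact left h12.symm one_ne_zero hij _ (s3 1 0 h12 one_ne_zero x)
    · exact left h02.symm (Ne.symm hj) hij _ (s3 0 j h02 (Ne.symm hj) x)
  · exact s3 i j hi hij x

theorem aux_field {F : Type*} [Field F] (K : Subgroup (SpecialLinearGroup (Fin (n + 3)) F))
    (h : ∀ (i j : Fin (n + 3)) (hij : i ≠ j) (x : F),
      SpecialLinearGroup.transvection hij x ∈ K) (M) : M ∈ K := by
  refine SpecialLinearGroup.diagonal_transvection_induction' (fun M => M ∈ K) M ?_ h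
    (fun A B hA hB => K.mul_mem hA hB)
  intro i j hij c hc
  have key : SpecialLinearGroup.diag2n hij c hc =
      SpecialLinearGroup.transvection hij c * SpecialLinearGroup.transvection hij.symm (-c⁻¹) *
      SpecialLinearGroup.transvection hij c * SpecialLinearGroup.transvection hij (-1) *
      SpecialLinearGroup.transvection hij.symm 1 * SpecialLinearGroup.transvection hij (-1) := by
    apply slext
    have e : SpecialLinearGroup.coeMonoidHom (SpecialLinearGroup.diag2n hij c hc) =
        1 + single i i (c - 1) + single j j (c⁻¹ - 1) := by
      refine (SpecialLinearGroup.diag2n_coe hij c hc).trans ?_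
      ext a b
      simp only [diagonal_apply, Matrix.add_apply, one_apply, single_apply]
      grind
    rw [e]
    simp only [map_mul, slt]
    simp [mul_add, add_mul, ← single_neg, hij.symm, hij, hc]
    simp only [sub_eq_add_neg, single_add, ← single_neg]
    abel
  rw [key]
  have := h i j hij
  have := h j i hij.symm
  repeat' apply K.mul_mem
  all_goals apply h

theorem aux_ker (K : Subgroup SLG) [hK : K.Normal] (q : R) (hq : q * q = 0)
    (h : ∀ (i j : Fin (n + 3)) (hij : i ≠ j) (x : R),
      SpecialLinearGroup.transvection hij (q * x) ∈ K)
    (M : SLG) (X : Matrix (Fin (n + 3)) (Fin (n + 3)) R) (hM : SpecialLinearGroup.coeMonoidHom M = 1 + q • X) : M ∈ K := by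
  let P : AddSubmonoid (Matrix (Fin (n + 3)) (Fin (n + 3)) R) :=
    { carrier := {Y | ∃ g ∈ K, SpecialLinearGroup.coeMonoidHom g = 1 + q • Y}
      zero_mem' := ⟨1, K.one_mem, by simp⟩
      add_mem' := by
        rintro Y Z ⟨g, hg, eg⟩ ⟨g', hg', eg'⟩
        refine ⟨g * g', K.mul_mem hg hg', ?_⟩
        rw [map_mul, eg, eg']
        simp only [mul_add, add_mul, smul_mul_smul_comm, hq, zero_smul, mul_one, one_mul,
          smul_add, add_zero]
        abel }
  have hoff : ∀ (i j : Fin (n + 3)) (hij : i ≠ j) (x : R), single i j x ∈ P := by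
    intro i j hij x
    refine ⟨_, h i j hij x, ?_⟩
    rw [slt]
    simp
  have hdiag : ∀ (i j : Fin (n + 3)) (x : R), single i i x - single j j x ∈ P := by
    intro i j x
    by_cases hij : i = j
    · subst hij; rw [sub_self]; exact P.zero_mem
    have h1 : single j i x + single i i x - single j j x - single i j x ∈ P := by
      refine ⟨_, hK.conj_mem _ (h j i (Ne.symm hij) x)
        (SpecialLinearGroup.transvection hij 1), ?_⟩
      rw [SpecialLinearGroup.transvection_inv]
      simp only [map_mul, slt]
      simp [mul_add, add_mul, ← single_neg, Ne.symm hij, hij, smul_sub]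
      abel
    have := P.add_mem (P.add_mem h1 (hoff i j hij x)) (hoff j i (Ne.symm hij) (-x))
    convert this using 1
    rw [← single_neg]; abel
  have htr : q * X.trace = 0 := by
    have : (SpecialLinearGroup.coeMonoidHom M).det = 1 := M.2
    rw [hM, det_one_add_smul, pow_two, hq, mul_zero, add_zero] at this
    rw [mul_comm]
    simpa using this
  have hX : X - single 0 0 X.trace ∈ P := by
    have : X - single 0 0 X.trace =
        ∑ i, ∑ j, (single i j (X i j) - if i = j then single 0 0 (X i i) else 0) := by
      simp only [Finset.sum_sub_distrib, Finset.sum_ite_eq, Finset.mem_univ, if_true]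
      rw [← matrix_eq_sum_single, trace]
      congr 1
      ext a b
      simp [Matrix.sum_apply, single_apply]
    rw [this]
    refine P.sum_mem fun i _ => P.sum_mem fun j _ => ?_
    split_ifs with hij
    · subst hij; exact hdiag _ _ _
    · rw [sub_zero]; exact hoff _ _ hij _
  obtain ⟨g, hg, eg⟩ := hX
  have : M = g := by
    apply slext
    rw [hM, eg, smul_sub, smul_single, smul_eq_mul, htr, single_zero, sub_zero]
  rw [this]; exact hg

theorem aux_surj {S : Type*} [CommRing S] (f : R →+* S) (hf : Function.Surjective f) (q : R)
    (hq : q * q = 0) (hfq : f q = 0) (hker : ∀ x, f x = 0 → ∃ y, x = q * y) :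
    Function.Surjective (SpecialLinearGroup.map (n := Fin (n + 3)) f) := by
  intro M
  choose g hg using hf
  let A : Matrix (Fin (n + 3)) (Fin (n + 3)) R := fun i j => g (M i j)
  have hA : f.mapMatrix A = (M : Matrix (Fin (n + 3)) (Fin (n + 3)) S) := by
    ext i j; rw [RingHom.mapMatrix_apply, Matrix.map_apply]; exact hg _
  obtain ⟨y, hy⟩ := hker (A.det - 1) (by rw [map_sub, RingHom.map_det, hA, M.det_coe]; simp)
  have hd : A.det = 1 + q * y := by rw [← hy]; ring
  refine ⟨⟨A.updateRow 0 ((1 - q * y) • A 0), ?_⟩, ?_⟩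
  · rw [det_updateRow_smul, updateRow_eq_self, hd]
    linear_combination (-y * y) * hq
  · apply slext
    ext i j
    change f (A.updateRow 0 ((1 - q * y) • A 0) i j) = M i j
    rw [updateRow_apply]
    split_ifs with hi
    · subst hi; simp [hfq, A, hg]
    · simp [A, hg]

end Helpers

/-- Let `p` be prime, `k ≥ 1`, `n ≥ 3`, and `ρ` a finite-dimensional complex
representation of `SL_n(ℤ/p^kℤ)`.  If `ρ(E_{1,2})^{p^{k-1}} = 1`, then `ρ` factors
through the reduction map `SL_n(ℤ/p^kℤ) → SL_n(ℤ/p^{k-1}ℤ)`. -/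
theorem factors_through_of_elementary_pow_eq_one (n p k N : ℕ) (hp : p.Prime) (hk : 1 ≤ k)
    (ρ : Matrix.SpecialLinearGroup (Fin (n + 3)) (ZMod (p ^ k)) →* GL (Fin N) ℂ)
    (h : ρ (Emat n (ZMod (p ^ k))) ^ p ^ (k - 1) = 1) :
    ∃ ρ' : Matrix.SpecialLinearGroup (Fin (n + 3)) (ZMod (p ^ (k - 1))) →* GL (Fin N) ℂ,
      ρ = ρ'.comp (Matrix.SpecialLinearGroup.map
        (ZMod.castHom (pow_dvd_pow p (Nat.sub_le k 1)) (ZMod (p ^ (k - 1))))) := by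
  have hE : ∀ m : ℕ, Emat n (ZMod (p ^ k)) ^ m = SpecialLinearGroup.transvection
      (zero_ne_one : (0 : Fin (n + 3)) ≠ 1) (m : ZMod (p ^ k)) := by
    intro m
    induction m with
    | zero => simp
    | succ m ih =>
      rw [pow_succ, ih, Nat.cast_succ, SpecialLinearGroup.transvection_add]
      rfl
  have hmem : SpecialLinearGroup.transvection
      (zero_ne_one : (0 : Fin (n + 3)) ≠ 1) ((p ^ (k - 1) : ℕ) : ZMod (p ^ k)) ∈ ρ.ker := by
    rw [MonoidHom.mem_ker, ← hE, map_pow, h]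
  have hall := aux_all ρ.ker _ hmem
  obtain rfl | hk2 := hk.eq_or_lt
  · refine ⟨1, ?_⟩
    haveI : Fact (p ^ 1).Prime := ⟨by simpa using hp⟩
    have := aux_field ρ.ker (fun i j hij x => by
      have := hall i j hij x
      simpa using this)
    ext1 M
    exact this M
  · have hq : ((p ^ (k - 1) : ℕ) : ZMod (p ^ k)) * ((p ^ (k - 1) : ℕ) : ZMod (p ^ k)) = 0 := by
      rw [← Nat.cast_mul, ZMod.natCast_eq_zero_iff, ← pow_add]
      exact pow_dvd_pow p (by omega)
    haveI : NeZero (p ^ k) := ⟨pow_ne_zero _ hp.ne_zero⟩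
    have hker : ∀ x, ZMod.castHom (pow_dvd_pow p (Nat.sub_le k 1)) (ZMod (p ^ (k - 1))) x = 0 →
        ∃ y, x = ((p ^ (k - 1) : ℕ) : ZMod (p ^ k)) * y := by
      intro x hx
      rw [← ZMod.natCast_zmod_val x, map_natCast, ZMod.natCast_eq_zero_iff] at hx
      obtain ⟨c, hc⟩ := hx
      refine ⟨(c : ZMod (p ^ k)), ?_⟩
      rw [← Nat.cast_mul, ← hc, ZMod.natCast_zmod_val]
    have hsurj := aux_surj (n := n)
      (ZMod.castHom (pow_dvd_pow p (Nat.sub_le k 1)) (ZMod (p ^ (k - 1))))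
      (ZMod.castHom_surjective _) _ hq (by rw [map_natCast, ZMod.natCast_self]) hker
    have hle : (SpecialLinearGroup.map (n := Fin (n + 3))
        (ZMod.castHom (pow_dvd_pow p (Nat.sub_le k 1)) (ZMod (p ^ (k - 1))))).ker ≤ ρ.ker := by
      intro M hM
      rw [MonoidHom.mem_ker] at hM
      have hx : ∀ i j, ∃ y, M i j - (1 : Matrix _ _ _) i j =
          ((p ^ (k - 1) : ℕ) : ZMod (p ^ k)) * y := by
        intro i j
        apply hker
        have := congrArg (fun g => SpecialLinearGroup.coeMonoidHom g i j) hM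
        change ZMod.castHom (pow_dvd_pow p (Nat.sub_le k 1)) (ZMod (p ^ (k - 1))) (M i j) =
          (1 : Matrix (Fin (n + 3)) (Fin (n + 3)) (ZMod (p ^ (k - 1)))) i j at this
        rw [map_sub, this]
        rw [one_apply, one_apply]
        split_ifs
        · rw [map_one, sub_self]
        · rw [map_zero, sub_self]
      choose X hX using hx
      refine aux_ker ρ.ker _ hq hall M X ?_
      ext i j
      have := hX i j
      change M i j = (1 : Matrix _ _ _) i j + ((p ^ (k - 1) : ℕ) : ZMod (p ^ k)) * X i j
      rw [← this]; ring
    refine ⟨MonoidHom.liftOfSurjective _ hsurj ⟨ρ, hle⟩, ?_⟩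
    exact (MonoidHom.liftOfRightInverse_comp _ _ _ ⟨ρ, hle⟩).symm
end
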